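/- arXiv:1104.5188 — 4 statements merged into one kernel-verified Lean document; each statement's English description precedes it below -/
import Mathlib

section
/- Let X be a metric space with a Busemann midpoint map m, and let B ⊆ X be a nonempty bounded set. Let C be the smallest subset of X containing B that is closed under midpoints (i.e., m(x,y) ∈ C whenever x, y ∈ C). Then diam(C) = diam(B). -/
open Filter MeasureTheory Metric Topology
open scoped Pointwise symmDiff ENNReal

/-- A Busemann midpoint map on a metric space. -/
structure BusemannMidpoint (X : Type*) [MetricSpace X] where
  mid : X → X → X
  dist_left : ∀ x y, dist x (mid x y) = dist x y / 2
  dist_right : ∀ x y, dist (mid x y) y = dist x y / 2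
  convex : ∀ x y x' y', dist (mid x y) (mid x' y') ≤ (dist x x' + dist y y') / 2

/-- A barycenter family on a metric space with a Busemann midpoint map. -/
structure BarycenterFamily (X : Type*) [MetricSpace X] (M : BusemannMidpoint X) where
  b : (n : ℕ) → (Fin n → X) → X
  b_one : ∀ x : Fin 1 → X, b 1 x = x 0
  b_two : ∀ x : Fin 2 → X, b 2 x = M.mid (x 0) (x 1)
  perm_invariant : ∀ (n : ℕ) (σ : Equiv.Perm (Fin n)) (x : Fin n → X), b n (x ∘ σ) = b n x
  lipschitz : ∀ (n : ℕ) (x y : Fin n → X),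
    dist (b n x) (b n y) ≤ (1 / n : ℝ) * ∑ i, dist (x i) (y i)
  recur : ∀ (n : ℕ), 1 ≤ n → ∀ x : Fin (n + 1) → X,
    b (n + 1) x = b (n + 1) (fun i => b n (x ∘ i.succAbove))

/-- The `k`-fold repetition of a tuple. -/
def repTuple {X : Type*} {n : ℕ} (Q : Fin n → X) (k : ℕ) : Fin (n * k) → X :=
  fun i => Q ⟨i.val % n, Nat.mod_lt _ (by
    rcases Nat.eq_zero_or_pos n with h | h
    · exact absurd i.isLt (by simp [h])
    · exact h)⟩

/-- the diameter of the midpoint-convex closure of a nonempty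
bounded set equals the diameter of the set. -/
theorem diam_midpoint_closure_eq {X : Type*} [MetricSpace X] (M : BusemannMidpoint X)
    (B : Set X) (hBne : B.Nonempty) (hBbdd : Bornology.IsBounded B)
    (C : Set X) (hBC : B ⊆ C)
    (hCmid : ∀ x ∈ C, ∀ y ∈ C, M.mid x y ∈ C)
    (hCmin : ∀ S : Set X, B ⊆ S → (∀ x ∈ S, ∀ y ∈ S, M.mid x y ∈ S) → C ⊆ S) :
    Metric.diam C = Metric.diam B := by
  have hid : ∀ z, M.mid z z = z := fun z => by
    have h := M.dist_left z z
    rw [dist_self, zero_div] at h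
    exact (dist_eq_zero.mp h).symm
  have hconv : ∀ z x y D, dist x z ≤ D → dist y z ≤ D → dist (M.mid x y) z ≤ D := by
    intro z x y D hx hy
    have h := M.convex x y z z
    rw [hid] at h
    linarith
  have h1 : C ⊆ {x | ∀ b ∈ B, dist x b ≤ Metric.diam B} :=
    hCmin _ (fun x hx b hb => Metric.dist_le_diam_of_mem hBbdd hx hb)
      (fun x hx y hy b hb => hconv b x y _ (hx b hb) (hy b hb))
  have h2 : C ⊆ {x | ∀ c ∈ C, dist x c ≤ Metric.diam B} :=
    hCmin _ (fun x hx c hc => by rw [dist_comm]; exact h1 hc x hx)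
      (fun x hx y hy c hc => hconv c x y _ (hx c hc) (hy c hc))
  have hCb : Bornology.IsBounded C :=
    Metric.isBounded_iff.mpr ⟨Metric.diam B, fun x hx y hy => h2 hx y hy⟩
  exact le_antisymm
    (Metric.diam_le_of_forall_dist_le Metric.diam_nonneg (fun x hx y hy => h2 hx y hy))
    (Metric.diam_mono hBC hCb)
end

section
/- Let k₀ ≥ 10 be an integer and define a sequence of positive integers by ℓ_1 := k₀² and ℓ_{j+1} := ℓ_j + ⌊√(ℓ_j)⌋. Then for all j ≥ 1, ℓ_j ≥ (k₀ + j)²/9. -/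
/-- growth of the sequence ℓ_{j+1} = ℓ_j + ⌊√ℓ_j⌋ starting from k₀². -/
theorem ell_seq_growth (k₀ : ℕ) (hk₀ : 10 ≤ k₀) (ℓ : ℕ → ℕ)
    (h1 : ℓ 1 = k₀ ^ 2)
    (hrec : ∀ j : ℕ, 1 ≤ j → ℓ (j + 1) = ℓ j + Nat.sqrt (ℓ j)) :
    ∀ j : ℕ, 1 ≤ j → ((k₀ + j : ℕ) : ℝ) ^ 2 / 9 ≤ (ℓ j : ℝ) := by
  have key : ∀ j : ℕ, 1 ≤ j → (k₀ + j) ^ 2 ≤ 9 * ℓ j := by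
    intro j hj
    induction j, hj using Nat.le_induction with
    | base => rw [h1]; nlinarith
    | succ j hj ih =>
      rw [hrec j hj]
      have hs : ℓ j < (Nat.sqrt (ℓ j) + 1) * (Nat.sqrt (ℓ j) + 1) := Nat.lt_succ_sqrt (ℓ j)
      generalize Nat.sqrt (ℓ j) = s at *
      have h3 : k₀ + j < 3 * (s + 1) := by
        by_contra! h
        nlinarith [Nat.mul_le_mul h h]
      nlinarith
  intro j hj
  have h : (((k₀ + j) ^ 2 : ℕ) : ℝ) ≤ ((9 * ℓ j : ℕ) : ℝ) := by exact_mod_cast key j hj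
  push_cast at h ⊢
  linarith
end

section
/- Let X be a metric space with a Busemann midpoint map m, let B ⊆ X be a nonempty compact set with diameter D := diam(B), and let B* := { m(x,y) : x, y ∈ B, dist(x,y) = D } be the set of midpoints of pairs of points of B realizing the diameter. If diam(B*) = D, then there exist points x₁, x₂, x₃, x₄ ∈ B such that dist(x_i, x_j) = D for all i ≠ j. -/
open Filter MeasureTheory Metric Topology
open scoped Pointwise symmDiff ENNReal

/-- The set of midpoints of pairs of points of A realizing the diameter of A. -/
def midStar {X : Type*} [MetricSpace X] (M : BusemannMidpoint X) (A : Set X) : Set X :=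
  {z | ∃ x ∈ A, ∃ y ∈ A, dist x y = Metric.diam A ∧ z = M.mid x y}

lemma exists_dist_eq_diam_aux {X : Type*} [MetricSpace X] {K : Set X} (hne : K.Nonempty)
    (hK : IsCompact K) : ∃ x ∈ K, ∃ y ∈ K, dist x y = Metric.diam K := by
  obtain ⟨p, hp, hmax⟩ := (hK.prod hK).exists_isMaxOn (hne.prod hne)
    (f := fun p : X × X => dist p.1 p.2) continuous_dist.continuousOn
  refine ⟨p.1, hp.1, p.2, hp.2, le_antisymm (Metric.dist_le_diam_of_mem hK.isBounded hp.1 hp.2) ?_⟩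
  exact Metric.diam_le_of_forall_dist_le dist_nonneg
    (fun x hx y hy => hmax (a := (x, y)) ⟨hx, hy⟩)

lemma mid_self_aux {X : Type*} [MetricSpace X] (M : BusemannMidpoint X) (z : X) :
    M.mid z z = z := by
  have h := M.dist_left z z
  rw [dist_self, zero_div, dist_eq_zero] at h
  exact h.symm

lemma dist_mid_le_aux {X : Type*} [MetricSpace X] (M : BusemannMidpoint X) (x y z : X) :
    dist (M.mid x y) z ≤ (dist x z + dist y z) / 2 := by
  have h := M.convex x y z z
  rwa [mid_self_aux] at h

lemma midStar_compact_aux {X : Type*} [MetricSpace X] (M : BusemannMidpoint X) {B : Set X}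
    (hB : IsCompact B) : IsCompact (midStar M B) := by
  have hc : Continuous (fun p : X × X => M.mid p.1 p.2) := by
    have : LipschitzWith 1 (fun p : X × X => M.mid p.1 p.2) := by
      refine LipschitzWith.of_dist_le_mul fun p q => ?_
      have h := M.convex p.1 p.2 q.1 q.2
      have h1 : dist p.1 q.1 ≤ dist p q := le_max_left _ _
      have h2 : dist p.2 q.2 ≤ dist p q := le_max_right _ _
      simp only [NNReal.coe_one, one_mul]
      linarith
    exact this.continuous
  have hS : IsCompact ((B ×ˢ B) ∩ {p : X × X | dist p.1 p.2 = Metric.diam B}) :=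
    (hB.prod hB).inter_right (isClosed_eq continuous_dist continuous_const)
  convert hS.image hc using 1
  ext z
  constructor
  · rintro ⟨x, hx, y, hy, hd, rfl⟩
    exact ⟨(x, y), ⟨⟨hx, hy⟩, hd⟩, rfl⟩
  · rintro ⟨⟨x, y⟩, ⟨⟨hx, hy⟩, hd⟩, rfl⟩
    exact ⟨x, hx, y, hy, hd, rfl⟩

/-- if the set of diameter-realizing midpoints of a nonempty
compact set B has the same diameter D as B, then B contains four points with
pairwise distances all equal to D. -/
theorem four_points_of_diam_midStar_eq {X : Type*} [MetricSpace X]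
    (M : BusemannMidpoint X) (B : Set X) (hBne : B.Nonempty) (hBcpt : IsCompact B)
    (hstar : Metric.diam (midStar M B) = Metric.diam B) :
    ∃ x₁ ∈ B, ∃ x₂ ∈ B, ∃ x₃ ∈ B, ∃ x₄ ∈ B,
      dist x₁ x₂ = Metric.diam B ∧ dist x₁ x₃ = Metric.diam B ∧
      dist x₁ x₄ = Metric.diam B ∧ dist x₂ x₃ = Metric.diam B ∧
      dist x₂ x₄ = Metric.diam B ∧ dist x₃ x₄ = Metric.diam B := by
  obtain ⟨a, ha, b, hb, hab⟩ := exists_dist_eq_diam_aux hBne hBcpt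
  obtain ⟨u, ⟨x, hx, y, hy, hxy, rfl⟩, v, ⟨z, hz, w, hw, hzw, rfl⟩, huv⟩ :=
    exists_dist_eq_diam_aux (K := midStar M B) ⟨_, a, ha, b, hb, hab, rfl⟩
      (midStar_compact_aux M hBcpt)
  rw [hstar] at huv
  have h0 := dist_mid_le_aux M x y (M.mid z w)
  have h1 := dist_mid_le_aux M z w x
  have h2 := dist_mid_le_aux M z w y
  rw [dist_comm _ x, dist_comm z x, dist_comm w x] at h1
  rw [dist_comm _ y, dist_comm z y, dist_comm w y] at h2
  have hD : ∀ p ∈ B, ∀ q ∈ B, dist p q ≤ Metric.diam B := fun p hp q hq =>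
    Metric.dist_le_diam_of_mem hBcpt.isBounded hp hq
  have e1 := hD x hx z hz
  have e2 := hD x hx w hw
  have e3 := hD y hy z hz
  have e4 := hD y hy w hw
  exact ⟨x, hx, y, hy, z, hz, w, hw, hxy, by linarith, by linarith, by linarith, by linarith, hzw⟩
end

section
/- Let X be a metric space with a Busemann midpoint map m, and let B ⊆ X be a nonempty compact set with diameter D := diam(B). Define inductively B_1 := B and B_{n+1} := (B_n)*, where for a compact set A, A* := { m(x,y) : x, y ∈ A, dist(x,y) = diam(A) }. If diam(B_N) = D for some N ≥ 1, then there exist 2^N points x₁, …, x_{2^N} ∈ B such that dist(x_i, x_j) = D for all i ≠ j. -/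
open Filter MeasureTheory Metric Topology
open scoped Pointwise symmDiff ENNReal

lemma aux_all_eq {ι : Type} [Fintype ι] (f : ι → ℝ) (D : ℝ) (n : ℕ)
    (hc : Fintype.card ι = 2 ^ n) (hf : ∀ i, f i ≤ D) (hs : 2 ^ n * D ≤ ∑ i, f i) :
    ∀ i, f i = D := by
  have h1 : ∑ i : ι, D = 2 ^ n * D := by
    simp [hc]
  have h2 : ∑ i, f i = ∑ i : ι, D :=
    le_antisymm (Finset.sum_le_sum fun i _ => hf i) (by rw [h1]; exact hs)
  have h3 := (Finset.sum_eq_sum_iff_of_le (fun i _ => hf i)).1 h2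
  exact fun i => h3 i (Finset.mem_univ i)

lemma aux_mid_self {X : Type*} [MetricSpace X] (M : BusemannMidpoint X) (x : X) :
    M.mid x x = x := by
  have := M.dist_left x x
  simp only [dist_self, zero_div] at this
  exact (dist_eq_zero.1 this).symm

lemma aux_mid_cont {X : Type*} [MetricSpace X] (M : BusemannMidpoint X) :
    Continuous (fun p : X × X => M.mid p.1 p.2) := by
  have : LipschitzWith 1 (fun p : X × X => M.mid p.1 p.2) := by
    refine LipschitzWith.of_dist_le_mul fun p q => ?_
    have h := M.convex p.1 p.2 q.1 q.2
    have h1 : dist p.1 q.1 ≤ dist p q := le_max_left _ _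
    have h2 : dist p.2 q.2 ≤ dist p q := le_max_right _ _
    simp only [NNReal.coe_one, one_mul]
    linarith
  exact this.continuous

lemma aux_compact {X : Type*} [MetricSpace X] (M : BusemannMidpoint X) (A : Set X)
    (hA : IsCompact A) : IsCompact (midStar M A) := by
  have h : IsCompact ((A ×ˢ A) ∩ {p : X × X | dist p.1 p.2 = Metric.diam A}) :=
    (hA.prod hA).inter_right (isClosed_eq (by fun_prop) continuous_const)
  convert h.image (aux_mid_cont M) using 1
  ext z
  constructor
  · rintro ⟨x, hx, y, hy, hd, rfl⟩
    exact ⟨(x, y), ⟨⟨hx, hy⟩, hd⟩, rfl⟩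
  · rintro ⟨⟨x, y⟩, ⟨⟨hx, hy⟩, hd⟩, rfl⟩
    exact ⟨x, hx, y, hy, hd, rfl⟩

lemma aux_nonempty {X : Type*} [MetricSpace X] (M : BusemannMidpoint X) (A : Set X)
    (hA : IsCompact A) (hn : A.Nonempty) : (midStar M A).Nonempty := by
  obtain ⟨⟨x, y⟩, ⟨hx, hy⟩, hm⟩ := (hA.prod hA).exists_isMaxOn (hn.prod hn)
    (f := fun p : X × X => dist p.1 p.2) (by fun_prop)
  refine ⟨M.mid x y, x, hx, y, hy, le_antisymm (dist_le_diam_of_mem hA.isBounded hx hy) ?_, rfl⟩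
  exact diam_le_of_forall_dist_le dist_nonneg fun a ha b hb => hm (a := (a, b)) ⟨ha, hb⟩

lemma aux_diam {X : Type*} [MetricSpace X] (M : BusemannMidpoint X) (A : Set X)
    (hA : IsCompact A) : Metric.diam (midStar M A) ≤ Metric.diam A := by
  refine diam_le_of_forall_dist_le diam_nonneg ?_
  rintro _ ⟨x, hx, y, hy, -, rfl⟩ _ ⟨x', hx', y', hy', -, rfl⟩
  have h1 := dist_le_diam_of_mem hA.isBounded hx hx'
  have h2 := dist_le_diam_of_mem hA.isBounded hy hy'
  linarith [M.convex x y x' y']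

lemma aux_main {X : Type*} [MetricSpace X] (M : BusemannMidpoint X) (B : Set X)
    (hb : IsCompact B) (Bs : ℕ → Set X) (h1 : Bs 1 = B)
    (hrec : ∀ n : ℕ, 1 ≤ n → Bs (n + 1) = midStar M (Bs n)) (n : ℕ)
    (hd : ∀ k, 1 ≤ k → k ≤ n → Metric.diam (Bs k) = Metric.diam B) :
    ∀ z ∈ Bs (n + 1), ∃ (ι : Type) (_ : Fintype ι) (x : ι → X), Fintype.card ι = 2 ^ n ∧
      (∀ i, x i ∈ B) ∧ (∀ i j, i ≠ j → dist (x i) (x j) = Metric.diam B) ∧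
      ∀ p, 2 ^ n * dist z p ≤ ∑ i, dist (x i) p := by
  induction n with
  | zero =>
    intro z hz
    rw [zero_add, h1] at hz
    refine ⟨Unit, inferInstance, fun _ => z, by simp, fun _ => hz, fun i j h => (h rfl).elim, ?_⟩
    simp
  | succ n ih =>
    intro z hz
    rw [hrec (n + 1) (by omega)] at hz
    obtain ⟨u, hu, w, hw, huw, rfl⟩ := hz
    rw [hd (n + 1) (by omega) le_rfl] at huw
    have ih' := ih fun k hk hk' => hd k hk (by omega)
    obtain ⟨ι, _, x, hcx, hx, hxd, hxp⟩ := ih' u hu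
    obtain ⟨κ, _, y, hcy, hy, hyd, hyp⟩ := ih' w hw
    have hpos : (0 : ℝ) < 2 ^ n := by positivity
    have hB : ∀ i j, dist (y j) (x i) ≤ Metric.diam B := fun i j =>
      dist_le_diam_of_mem hb.isBounded (hy j) (hx i)
    have hle : ∀ i, dist (x i) w ≤ Metric.diam B := by
      intro i
      have h := hyp (x i)
      have h2 : ∑ j, dist (y j) (x i) ≤ ∑ j : κ, Metric.diam B :=
        Finset.sum_le_sum fun j _ => hB i j
      have h3 : ∑ j : κ, Metric.diam B = 2 ^ n * Metric.diam B := by simp [hcy]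
      rw [dist_comm]
      exact le_of_mul_le_mul_left (by linarith) hpos
    have he : ∀ i, dist (x i) w = Metric.diam B :=
      aux_all_eq _ _ n hcx hle (by rw [← huw]; exact hxp w)
    have hee : ∀ i j, dist (y j) (x i) = Metric.diam B := fun i =>
      aux_all_eq _ _ n hcy (hB i) (by rw [← he i, dist_comm]; exact hyp (x i))
    refine ⟨ι ⊕ κ, inferInstance, Sum.elim x y, ?_, ?_, ?_, ?_⟩
    · rw [Fintype.card_sum, hcx, hcy]; ring
    · rintro (i | j)
      · exact hx i
      · exact hy j
    · rintro (i | i) (j | j) h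
      · exact hxd i j fun e => h (by rw [e])
      · simpa [dist_comm] using hee i j
      · exact hee j i
      · exact hyd i j fun e => h (by rw [e])
    · intro p
      rw [Fintype.sum_sum_type]
      simp only [Sum.elim_inl, Sum.elim_inr]
      have hc := M.convex u w p p
      rw [aux_mid_self] at hc
      have := mul_le_mul_of_nonneg_left hc hpos.le
      have e1 := hxp p
      have e2 := hyp p
      rw [pow_succ]
      linarith

/-- if the N-th iterated set of diameter-realizing midpoints of a
nonempty compact set B still has the same diameter D as B, then B contains 2^N
points with pairwise distances all equal to D. -/
theorem points_of_diam_iterate_midStar_eq {X : Type*} [MetricSpace X]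
    (M : BusemannMidpoint X) (B : Set X) (hBne : B.Nonempty) (hBcpt : IsCompact B)
    (Bs : ℕ → Set X) (h1 : Bs 1 = B)
    (hrec : ∀ n : ℕ, 1 ≤ n → Bs (n + 1) = midStar M (Bs n))
    (N : ℕ) (hN : 1 ≤ N) (hdiam : Metric.diam (Bs N) = Metric.diam B) :
    ∃ x : Fin (2 ^ N) → X, (∀ i, x i ∈ B) ∧
      ∀ i j, i ≠ j → dist (x i) (x j) = Metric.diam B := by
  have hcn : ∀ n, 1 ≤ n → IsCompact (Bs n) ∧ (Bs n).Nonempty := by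
    intro n hn
    induction n, hn using Nat.le_induction with
    | base => rw [h1]; exact ⟨hBcpt, hBne⟩
    | succ n hn ih =>
      rw [hrec n hn]
      exact ⟨aux_compact M _ ih.1, aux_nonempty M _ ih.1 ih.2⟩
  have hanti : ∀ k, 1 ≤ k → ∀ n, k ≤ n → Metric.diam (Bs n) ≤ Metric.diam (Bs k) := by
    intro k hk n hn
    induction n, hn using Nat.le_induction with
    | base => exact le_rfl
    | succ n hn ih =>
      rw [hrec n (hk.trans hn)]
      exact (aux_diam M _ (hcn n (hk.trans hn)).1).trans ih
  have hd : ∀ k, 1 ≤ k → k ≤ N → Metric.diam (Bs k) = Metric.diam B := by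
    intro k hk hkN
    refine le_antisymm ?_ ?_
    · rw [← h1]; exact hanti 1 le_rfl k hk
    · rw [← hdiam]; exact hanti k hk N hkN
  obtain ⟨z, hz⟩ := (hcn (N + 1) (by omega)).2
  obtain ⟨ι, _, x, hc, hx, hxd, -⟩ := aux_main M B hBcpt Bs h1 hrec N hd z hz
  let e := Fintype.equivFinOfCardEq hc
  exact ⟨fun i => x (e.symm i), fun i => hx _, fun i j h =>
    hxd _ _ fun h' => h (e.symm.injective h')⟩
end
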